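/- Let α > 1 with α ∉ ℚ ∪ ℚ₂, let B ⊂ ℍ be nonempty with B̂ = B \ {x ∈ ℍ : x₂ ≤ |x₁|^{1/α}} finite, and define h₀ = max_{x ∈ B̂} x₂ if B̂ ≠ ∅, and h₀ = min{h ≥ 0 : B ∩ ([−⌈h^α⌉, ⌈h^α⌉] × [0,h]) ≠ ∅} if B̂ = ∅. Let D₀ = [−⌈h₀^α⌉, ⌈h₀^α⌉] × [0, h₀] and B₀ = B ∩ D₀ (so 1 ≤ |B₀| < ∞). Then there exists a constant c > 0 such that for all sufficiently large N, H_{B,N}(B₀) = Σ_{x ∈ B₀} H_{B,N}(x) ≥ c; in particular Σ_{x ∈ B₀} H_B(x) ≥ c > 0. -/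

import Mathlib

open Filter

namespace SHM

/-- The upper half planar lattice `ℍ = {(x₁,x₂) ∈ ℤ² : x₂ ≥ 0}` (including the x-axis). -/
def upperH : Set (ℤ × ℤ) := {p | 0 ≤ p.2}

/-- The horizontal line `L_n = {(x,n) : x ∈ ℤ}` of height `n`. -/
def lineH (n : ℤ) : Set (ℤ × ℤ) := {p | p.2 = n}

/-- The four unit steps of the planar simple random walk. -/
def dirs : Finset (ℤ × ℤ) := {(1,0), (-1,0), (0,1), (0,-1)}

/-- The position after `m` steps of the walk started at `z` whose first `n`
increments are given by `σ`. -/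
def pos (z : ℤ × ℤ) {n : ℕ} (σ : Fin n → ℤ × ℤ) (m : ℕ) : ℤ × ℤ :=
  z + ∑ i ∈ Finset.univ.filter (fun i : Fin n => (i : ℕ) < m), σ i

/-- The probability that the first `n` increments of the simple random walk
(each uniform on the four unit vectors) satisfy the predicate `E`. -/
noncomputable def stepProb (n : ℕ) (E : (Fin n → ℤ × ℤ) → Prop) : ℝ :=
  (Nat.card {σ : Fin n → ↥dirs // E fun i => ((σ i : ℤ × ℤ))} : ℝ) / 4 ^ n

/-- `P_z(S_{τ̄_A} = x)` : the walk started at `z` hits `A` (in finite time) for the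
first time precisely at the point `x`.  Here `τ̄_A = min {m ≥ 0 : S_m ∈ A}`. -/
noncomputable def hitProb (z : ℤ × ℤ) (A : Set (ℤ × ℤ)) (x : ℤ × ℤ) : ℝ :=
  ∑' n : ℕ, stepProb n fun σ =>
    pos z σ n = x ∧ x ∈ A ∧ ∀ m < n, pos z σ m ∉ A

/-- `P_z(τ̄_A < τ̄_B)` : the walk started at `z` hits `A` strictly before hitting `B`. -/
noncomputable def hitBeforeProb (z : ℤ × ℤ) (A B : Set (ℤ × ℤ)) : ℝ :=
  ∑' n : ℕ, stepProb n fun σ =>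
    pos z σ n ∈ A ∧ pos z σ n ∉ B ∧ ∀ m < n, pos z σ m ∉ A ∧ pos z σ m ∉ B

/-- The stationary harmonic measure `H_{B,N}(x) = Σ_{z ∈ L_N \ B} P_z(S_{τ̄_{B ∪ L₀}} = x)`. -/
noncomputable def harm (B : Set (ℤ × ℤ)) (N : ℕ) (x : ℤ × ℤ) : ℝ :=
  ∑' z : ↥(lineH (N : ℤ) \ B), hitProb (z : ℤ × ℤ) (B ∪ lineH 0) x

/-- `ℚ₁ = {log n₁ / log n₂ : n₁, n₂ ∈ ℤ, n₁, n₂ ≥ 2}`. -/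
def Q1 : Set ℝ := {r | ∃ n₁ n₂ : ℤ, 2 ≤ n₁ ∧ 2 ≤ n₂ ∧ r = Real.log n₁ / Real.log n₂}

/-- `ℚ₂ = {(b − dx)/(cx − a) ∈ ℝ : x ∈ ℚ₁, a, b, c, d ∈ ℤ}`. -/
def Q2 : Set ℝ :=
  {r | ∃ x ∈ Q1, ∃ a b c d : ℤ, (c : ℝ) * x - a ≠ 0 ∧ r = ((b : ℝ) - d * x) / ((c : ℝ) * x - a)}

/-- `B̂ = B \ {x ∈ ℍ : x₂ ≤ |x₁|^{1/α}}`. -/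
def Bhat (α : ℝ) (B : Set (ℤ × ℤ)) : Set (ℤ × ℤ) :=
  B \ {x ∈ upperH | (x.2 : ℝ) ≤ |(x.1 : ℝ)| ^ (1 / α)}

/-- The box `D₀ = [−⌈h₀^α⌉, ⌈h₀^α⌉] × [0, h₀]`. -/
def boxD₀ (α : ℝ) (h₀ : ℤ) : Set (ℤ × ℤ) :=
  {x | |x.1| ≤ ⌈(h₀ : ℝ) ^ α⌉ ∧ 0 ≤ x.2 ∧ x.2 ≤ h₀}

/-! ### The killed walk operator -/

/-- One step of the simple random walk, killed when leaving `U`. -/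
noncomputable def T (U : Set (ℤ × ℤ)) : (ℤ × ℤ → ℝ) →ₗ[ℝ] (ℤ × ℤ → ℝ) where
  toFun φ := fun y => (1/4) * ∑ e ∈ dirs, U.indicator φ (y + e)
  map_add' φ ψ := by
    funext y
    rw [show U.indicator (φ + ψ) = U.indicator φ + U.indicator ψ from Set.indicator_add' U φ ψ]
    simp only [Pi.add_apply, Finset.sum_add_distrib, mul_add]
  map_smul' r φ := by
    funext y
    simp only [RingHom.id_apply]
    rw [show U.indicator (r • φ) = r • U.indicator φ from Set.indicator_const_smul U r φ]
    simp only [Pi.smul_apply, smul_eq_mul, ← Finset.mul_sum]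
    ring

lemma T_apply (U : Set (ℤ × ℤ)) (φ : ℤ × ℤ → ℝ) (y : ℤ × ℤ) :
    T U φ y = (1/4) * ∑ e ∈ dirs, U.indicator φ (y + e) := rfl

lemma T_succ (U : Set (ℤ × ℤ)) (n : ℕ) (φ : ℤ × ℤ → ℝ) :
    (T U ^ (n+1)) φ = T U ((T U ^ n) φ) := by
  rw [pow_succ', Module.End.mul_apply]

lemma sum_dirs (F : ℤ × ℤ → ℝ) :
    ∑ e ∈ dirs, F e = F (1,0) + F (-1,0) + F (0,1) + F (0,-1) := by
  unfold dirs
  rw [Finset.sum_insert (by decide), Finset.sum_insert (by decide), Finset.sum_insert (by decide),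
    Finset.sum_singleton]
  ring

lemma T_mono (U : Set (ℤ × ℤ)) {φ ψ : ℤ × ℤ → ℝ} (h : ∀ y ∈ U, φ y ≤ ψ y) (y : ℤ × ℤ) :
    T U φ y ≤ T U ψ y := by
  rw [T_apply, T_apply]
  refine mul_le_mul_of_nonneg_left (Finset.sum_le_sum fun e _ => ?_) (by norm_num)
  exact Set.indicator_le_indicator' (fun hu => h _ hu)

lemma Tn_mono (U : Set (ℤ × ℤ)) {φ ψ : ℤ × ℤ → ℝ} (h : ∀ y ∈ U, φ y ≤ ψ y) (n : ℕ) :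
    ∀ y ∈ U, (T U ^ n) φ y ≤ (T U ^ n) ψ y := by
  induction n with
  | zero => simpa using h
  | succ n ih =>
    intro y _
    rw [T_succ, T_succ]
    exact T_mono U ih y

lemma T_nonneg (U : Set (ℤ × ℤ)) {φ : ℤ × ℤ → ℝ} (h : ∀ y, 0 ≤ φ y) (y : ℤ × ℤ) :
    0 ≤ T U φ y := by
  rw [T_apply]
  have : ∀ e ∈ dirs, 0 ≤ U.indicator φ (y + e) :=
    fun e _ => Set.indicator_nonneg (fun z _ => h z) _
  have := Finset.sum_nonneg this
  positivity

lemma Tn_nonneg (U : Set (ℤ × ℤ)) {φ : ℤ × ℤ → ℝ} (h : ∀ y, 0 ≤ φ y) (n : ℕ) :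
    ∀ y, 0 ≤ (T U ^ n) φ y := by
  induction n with
  | zero => simpa using h
  | succ n ih =>
    intro y
    rw [T_succ]
    exact T_nonneg U ih y

lemma upper_sum (U : Set (ℤ × ℤ)) {w s : ℤ × ℤ → ℝ} (h : ∀ y ∈ U, T U w y ≤ w y - s y) (n : ℕ) :
    ∀ y ∈ U, (T U ^ n) w y + ∑ m ∈ Finset.range n, (T U ^ m) s y ≤ w y := by
  induction n with
  | zero => simp
  | succ n ih =>
    intro y hy
    have h1 : T U ((T U ^ n) w + ∑ m ∈ Finset.range n, (T U ^ m) s) y ≤ T U w y := by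
      apply T_mono
      intro z hz
      simpa using ih z hz
    rw [map_add, map_sum] at h1
    simp only [← T_succ, Pi.add_apply, Finset.sum_apply] at h1
    rw [Finset.sum_range_succ']
    simp only [pow_zero, Module.End.one_apply]
    have := h y hy
    linarith

lemma lower_sum (U : Set (ℤ × ℤ)) {v s : ℤ × ℤ → ℝ} (h : ∀ y ∈ U, v y - s y ≤ T U v y) (n : ℕ) :
    ∀ y ∈ U, v y ≤ (T U ^ n) v y + ∑ m ∈ Finset.range n, (T U ^ m) s y := by
  intro y hy
  have := upper_sum U (w := -v) (s := -s) (by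
    intro z hz
    have := h z hz
    simp only [map_neg, Pi.neg_apply]
    linarith) n y hy
  simp only [map_neg, Pi.neg_apply, Finset.sum_neg_distrib] at this
  linarith

lemma column_ge (U : Set (ℤ × ℤ)) {φ : ℤ × ℤ → ℝ} (h : ∀ y, 0 ≤ φ y) (k : ℕ) :
    ∀ a b : ℤ, (∀ j : ℤ, b < j → (a, j) ∈ U) →
      (1/4)^k * φ (a, b + k) ≤ (T U ^ k) φ (a, b) := by
  induction k with
  | zero => simp
  | succ k ih =>
    intro a b hU
    rw [T_succ, T_apply]
    have h1 := ih a (b+1) (fun j hj => hU j (by omega))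
    have h2 : U.indicator ((T U ^ k) φ) ((a,b) + (0,1)) ≤
        ∑ e ∈ dirs, U.indicator ((T U ^ k) φ) ((a,b) + e) := by
      apply Finset.single_le_sum (f := fun e => U.indicator ((T U ^ k) φ) ((a,b) + e))
      · intro e _
        exact Set.indicator_nonneg (fun z _ => Tn_nonneg U h k z) _
      · decide
    have h3 : ((a,b) + (0,1) : ℤ × ℤ) = (a, b+1) := by simp
    rw [h3, Set.indicator_of_mem (hU _ (by omega))] at h2
    have h4 : b + 1 + (k : ℤ) = b + ((k + 1 : ℕ) : ℤ) := by push_cast; ring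
    rw [h4] at h1
    rw [pow_succ]
    linarith

/-! ### Reversal -/

lemma kernel_right (U : Set (ℤ × ℤ)) (n : ℕ) : ∀ x z : ℤ × ℤ,
    (T U ^ (n+1)) (Pi.single z 1) x =
      U.indicator (fun z => (1/4) * ∑ e ∈ dirs, (T U ^ n) (Pi.single (z + e) 1) x) z := by
  induction n with
  | zero =>
    intro x z
    simp only [zero_add, pow_one, pow_zero, Module.End.one_apply]
    rw [T_apply]
    have key : ∀ e : ℤ × ℤ, U.indicator (Pi.single z (1:ℝ)) (x + e)
        = U.indicator (fun z => (Pi.single (z + (-e)) 1 : ℤ × ℤ → ℝ) x) z := by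
      intro e
      by_cases hz : x + e = z
      · subst hz
        simp [Set.indicator]
      · have : x ≠ z + -e := by
          rintro rfl
          simp at hz
        simp [Set.indicator, hz, this]
    rw [sum_dirs]
    simp only [key]
    by_cases hz : z ∈ U
    · simp only [Set.indicator_of_mem hz]
      rw [sum_dirs]
      simp only [Prod.neg_mk, neg_neg, neg_zero]
      ring
    · simp [hz]
  | succ n ih =>
    intro x z
    rw [T_succ, T_apply]
    by_cases hz : z ∈ U
    · simp only [Set.indicator_of_mem hz]
      simp only [T_succ U n, T_apply U ((T U ^ n) _) x]
      rw [← Finset.mul_sum, Finset.sum_comm]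
      congr 1
      rw [Finset.mul_sum]
      apply Finset.sum_congr rfl
      intro e _
      by_cases hx : x + e ∈ U
      · simp only [Set.indicator_of_mem hx]
        rw [← T_succ, ih, Set.indicator_of_mem hz]
      · simp [hx]
    · simp only [Set.indicator_of_notMem hz]
      have : ∀ e ∈ dirs, U.indicator ((T U ^ (n+1)) (Pi.single z 1)) (x+e) = 0 := by
        intro e _
        by_cases hx : x + e ∈ U
        · rw [Set.indicator_of_mem hx, ih, Set.indicator_of_notMem hz]
        · simp [hx]
      rw [Finset.sum_eq_zero this]; simp

lemma pos_cons (z : ℤ × ℤ) {n : ℕ} (e : ℤ × ℤ) (σ : Fin n → ℤ × ℤ) (m : ℕ) :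
    pos z (Fin.cons e σ : Fin (n+1) → ℤ × ℤ) (m+1) = pos (z + e) σ m := by
  unfold pos
  rw [Finset.sum_filter, Finset.sum_filter, Fin.sum_univ_succ]
  simp [add_assoc]

lemma pos_zero (z : ℤ × ℤ) {n : ℕ} (σ : Fin n → ℤ × ℤ) : pos z σ 0 = z := by
  simp [pos]

lemma stepProb_congr (n : ℕ) {E F : (Fin n → ℤ × ℤ) → Prop} (h : ∀ σ, E σ ↔ F σ) :
    stepProb n E = stepProb n F := by
  have : E = F := funext fun σ => propext (h σ)
  rw [this]

lemma stepProb_succ (n : ℕ) (E : (Fin (n+1) → ℤ × ℤ) → Prop) :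
    stepProb (n+1) E = (1/4) * ∑ e ∈ dirs, stepProb n (fun σ => E (Fin.cons e σ)) := by
  classical
  unfold stepProb
  have h1 : Nat.card {σ : Fin (n+1) → ↥dirs // E fun i => ((σ i : ℤ × ℤ))}
      = ∑ e : ↥dirs, Nat.card {σ : Fin n → ↥dirs //
          E (Fin.cons (e : ℤ × ℤ) (fun i => ((σ i : ℤ × ℤ))))} := by
    rw [← Nat.card_sigma]
    apply Nat.card_congr
    refine ⟨fun s => ⟨s.1 0, ⟨fun i => s.1 i.succ, ?_⟩⟩, fun s => ⟨Fin.cons s.1 s.2.1, ?_⟩, ?_, ?_⟩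
    · have := s.2
      convert this using 1
      funext i
      refine Fin.cases ?_ (fun j => ?_) i <;> simp
    · have := s.2.2
      convert this using 1
      funext i
      refine Fin.cases ?_ (fun j => ?_) i <;> simp
    · rintro ⟨s, hs⟩
      apply Subtype.ext
      funext i
      refine Fin.cases ?_ (fun j => ?_) i <;> simp
    · rintro ⟨e, s, hs⟩
      rfl
  rw [h1]
  rw [← Finset.sum_coe_sort dirs (fun e => (Nat.card {σ : Fin n → ↥dirs //
          E (Fin.cons (e : ℤ × ℤ) (fun i => ((σ i : ℤ × ℤ))))} : ℝ) / 4 ^ n)]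
  push_cast
  rw [← Finset.sum_div, pow_succ]
  field_simp

lemma stepProb_zero (E : (Fin 0 → ℤ × ℤ) → Prop) [Decidable (E Fin.elim0)] :
    stepProb 0 E = if E Fin.elim0 then 1 else 0 := by
  unfold stepProb
  have : ∀ σ : Fin 0 → ↥dirs, (fun i => ((σ i : ℤ × ℤ))) = Fin.elim0 := by
    intro σ; funext i; exact i.elim0
  simp only [this]
  split_ifs with h
  · simp [h]
  · simp [h]

/-- The killed upper half plane. -/
def UU (B : Set (ℤ × ℤ)) : Set (ℤ × ℤ) := {y | 0 < y.2 ∧ y ∉ B}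

lemma dirs_snd {e : ℤ × ℤ} (he : e ∈ dirs) : -1 ≤ e.2 := by
  simp only [dirs, Finset.mem_insert, Finset.mem_singleton] at he
  rcases he with rfl | rfl | rfl | rfl <;> simp

lemma reversal (B : Set (ℤ × ℤ)) (x : ℤ × ℤ) (hx : x ∈ B) (n : ℕ) : ∀ z : ℤ × ℤ, 0 ≤ z.2 →
    stepProb n (fun σ => pos z σ n = x ∧ x ∈ B ∪ lineH 0 ∧ ∀ m < n, pos z σ m ∉ B ∪ lineH 0)
      = (T (UU B) ^ n) (Pi.single z 1) x := by
  classical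
  have hxA : x ∈ B ∪ lineH 0 := Or.inl hx
  induction n with
  | zero =>
    intro z _
    rw [stepProb_zero]
    simp only [pos_zero, pow_zero, Module.End.one_apply, Pi.single_apply, hxA]
    simp [eq_comm]
  | succ n ih =>
    intro z hz
    rw [stepProb_succ, kernel_right]
    by_cases hzU : z ∈ UU B
    · rw [Set.indicator_of_mem hzU]
      congr 1
      apply Finset.sum_congr rfl
      intro e he
      have := dirs_snd he
      have h0 : 0 < z.2 := hzU.1
      rw [← ih (z + e) (by simp only [Prod.snd_add]; omega)]
      apply stepProb_congr
      intro σ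
      rw [pos_cons]
      refine and_congr Iff.rfl (and_congr Iff.rfl ⟨fun h m hm => ?_, fun h m hm => ?_⟩)
      · have := h (m+1) (by omega)
        rwa [pos_cons] at this
      · cases m with
        | zero =>
          rw [pos_zero]
          rintro (h' | h')
          · exact hzU.2 h'
          · simp only [lineH, Set.mem_ofPred_eq] at h'
            omega
        | succ m =>
          rw [pos_cons]
          exact h m (by omega)
    · rw [Set.indicator_of_notMem hzU]
      rw [Finset.sum_eq_zero, mul_zero]
      intro e _
      have : ∀ σ : Fin n → ℤ × ℤ, ¬ (pos z (Fin.cons e σ : Fin (n+1) → ℤ × ℤ) (n+1) = x ∧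
          x ∈ B ∪ lineH 0 ∧ ∀ m < n+1, pos z (Fin.cons e σ : Fin (n+1) → ℤ × ℤ) m ∉ B ∪ lineH 0) := by
        rintro σ ⟨-, -, h⟩
        have := h 0 (by omega)
        rw [pos_zero] at this
        apply hzU
        simp only [Set.mem_union, lineH, Set.mem_ofPred_eq, not_or] at this
        exact ⟨by have := this.2; omega, this.1⟩
      unfold stepProb
      have hem : IsEmpty {σ : Fin n → ↥dirs // pos z (Fin.cons e (fun i => ((σ i : ℤ × ℤ))) :
          Fin (n+1) → ℤ × ℤ) (n+1) = x ∧ x ∈ B ∪ lineH 0 ∧ ∀ m < n+1,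
          pos z (Fin.cons e (fun i => ((σ i : ℤ × ℤ))) : Fin (n+1) → ℤ × ℤ) m ∉ B ∪ lineH 0} :=
        ⟨fun s => this _ s.2⟩
      rw [Nat.card_of_isEmpty]
      simp

lemma hasSum_Tn (U Z : Set (ℤ × ℤ)) (n : ℕ) : ∀ y,
    HasSum (fun z : ↥Z => (T U ^ n) (Pi.single (z : ℤ × ℤ) 1) y) ((T U ^ n) (Z.indicator 1) y) := by
  classical
  induction n with
  | zero =>
    intro y
    simp only [pow_zero, Module.End.one_apply]
    by_cases hy : y ∈ Z
    · rw [Set.indicator_of_mem hy, Pi.one_apply]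
      convert hasSum_ite_eq (⟨y, hy⟩ : ↥Z) (1:ℝ) using 2 with z
      simp only [Pi.single_apply, Subtype.ext_iff, eq_comm]
    · rw [Set.indicator_of_notMem hy]
      convert hasSum_zero using 2 with z
      rw [Pi.single_apply, if_neg]
      rintro rfl
      exact hy z.2
  | succ n ih =>
    intro y
    simp only [T_succ, T_apply]
    apply HasSum.mul_left
    apply hasSum_sum
    intro e _
    by_cases h : y + e ∈ U
    · simp only [Set.indicator_of_mem h]
      exact ih _
    · simp only [Set.indicator_of_notMem h]
      exact hasSum_zero

/-! ### The correction function -/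

/-- Decay rate in the vertical direction of the exact discrete harmonic functions. -/
noncomputable def rho (lam : ℝ) : ℝ :=
  1 + (1 - Real.cos lam) - Real.sqrt ((1 - Real.cos lam)^2 + 2 * (1 - Real.cos lam))

lemma rho_eq (lam : ℝ) : rho lam ^ 2 + 1 = (4 - 2 * Real.cos lam) * rho lam := by
  unfold rho
  have h0 : 0 ≤ (1 - Real.cos lam)^2 + 2 * (1 - Real.cos lam) := by
    have := Real.cos_le_one lam
    nlinarith [sq_nonneg (1 - Real.cos lam)]
  have := Real.sq_sqrt h0
  nlinarith

lemma rho_le_one (lam : ℝ) : rho lam ≤ 1 := by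
  unfold rho
  have := Real.cos_le_one lam
  have : 1 - Real.cos lam ≤ Real.sqrt ((1 - Real.cos lam)^2 + 2 * (1 - Real.cos lam)) := by
    apply Real.le_sqrt_of_sq_le
    linarith
  linarith

lemma rho_nonneg (lam : ℝ) : 0 ≤ rho lam := by
  unfold rho
  have := Real.cos_le_one lam
  have : Real.sqrt ((1 - Real.cos lam)^2 + 2 * (1 - Real.cos lam)) ≤ 1 + (1 - Real.cos lam) := by
    apply Real.sqrt_le_iff.2
    constructor
    · linarith
    · nlinarith
  linarith

lemma one_sub_rho_le {lam : ℝ} (h : 0 ≤ lam) : 1 - rho lam ≤ lam := by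
  unfold rho
  have h1 := Real.cos_le_one lam
  have h2 := Real.one_sub_sq_div_two_le_cos (x := lam)
  have : Real.sqrt ((1 - Real.cos lam)^2 + 2 * (1 - Real.cos lam)) ≤ lam + (1 - Real.cos lam) := by
    apply Real.sqrt_le_iff.2
    constructor
    · linarith
    · nlinarith [mul_nonneg h (sub_nonneg.2 h1)]
  linarith

/-- One frequency. -/
noncomputable def tm (θ : ℝ) (k : ℕ) (y : ℤ × ℤ) : ℝ :=
  θ ^ k * (1 - Real.cos ((1/2)^k * (y.1 : ℝ)) * rho ((1/2)^k) ^ y.2.toNat)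

/-- The correction function, exactly discrete harmonic for positive heights. -/
noncomputable def ff (θ : ℝ) (y : ℤ × ℤ) : ℝ := ∑' k, tm θ k y

lemma tm_ge {θ : ℝ} (hθ : 0 ≤ θ) (k : ℕ) (y : ℤ × ℤ) {c : ℝ} (hc : 0 ≤ c)
    (h : Real.cos ((1/2)^k * (y.1 : ℝ)) ≤ c) :
    θ ^ k * (1 - c) ≤ tm θ k y := by
  unfold tm
  have h1 := pow_le_one₀ (n := y.2.toNat) (rho_nonneg ((1/2)^k)) (rho_le_one _)
  have h2 := pow_nonneg (rho_nonneg ((1/2)^k)) y.2.toNat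
  apply mul_le_mul_of_nonneg_left _ (pow_nonneg hθ k)
  nlinarith [mul_le_mul_of_nonneg_right h h2, mul_le_mul_of_nonneg_left h1 hc]

lemma tm_nonneg {θ : ℝ} (hθ : 0 ≤ θ) (k : ℕ) (y : ℤ × ℤ) : 0 ≤ tm θ k y := by
  have := tm_ge hθ k y zero_le_one (Real.cos_le_one _)
  simpa using this

lemma tm_le_two {θ : ℝ} (hθ : 0 ≤ θ) (k : ℕ) (y : ℤ × ℤ) : tm θ k y ≤ θ ^ k * 2 := by
  unfold tm
  have h1 := pow_le_one₀ (n := y.2.toNat) (rho_nonneg ((1/2)^k)) (rho_le_one _)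
  have h2 := pow_nonneg (rho_nonneg ((1/2)^k)) y.2.toNat
  have h3 := Real.neg_one_le_cos ((1/2)^k * (y.1 : ℝ))
  apply mul_le_mul_of_nonneg_left _ (pow_nonneg hθ k)
  nlinarith

lemma tm_le {θ : ℝ} (hθ : 0 ≤ θ) (k : ℕ) (y : ℤ × ℤ) :
    tm θ k y ≤ (θ / 2) ^ k * ((y.1 : ℝ) ^ 2 + y.2.toNat) := by
  have hl : (0:ℝ) < (1/2)^k := by positivity
  have hl1 : ((1:ℝ)/2)^k ≤ 1 := pow_le_one₀ (by norm_num) (by norm_num)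
  have e : (θ / 2) ^ k * ((y.1 : ℝ) ^ 2 + y.2.toNat)
      = θ ^ k * ((1/2)^k * ((y.1 : ℝ) ^ 2 + y.2.toNat)) := by
    rw [div_pow, div_pow, one_pow]; ring
  rw [e]
  unfold tm
  set l : ℝ := (1/2)^k with hldef
  set n := y.2.toNat
  have h1 := pow_le_one₀ (n := n) (rho_nonneg l) (rho_le_one l)
  have h2 := pow_nonneg (rho_nonneg l) n
  have h3 := Real.cos_le_one (l * (y.1 : ℝ))
  have h4 := Real.one_sub_sq_div_two_le_cos (x := l * (y.1 : ℝ))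
  have h5 : 1 - n * l ≤ rho l ^ n := by
    have hb := one_add_mul_le_pow (a := rho l - 1) (by linarith [rho_nonneg l]) n
    have := one_sub_rho_le hl.le
    have hn : (0:ℝ) ≤ n := Nat.cast_nonneg n
    have h6 := mul_le_mul_of_nonneg_left this hn
    have h7 : 1 + (rho l - 1) = rho l := by ring
    rw [h7] at hb
    nlinarith
  apply mul_le_mul_of_nonneg_left _ (pow_nonneg hθ k)
  have h8 : (l * (y.1:ℝ))^2 ≤ l * (y.1:ℝ)^2 := by
    have : (l * (y.1:ℝ))^2 = (l * l) * (y.1:ℝ)^2 := by ring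
    rw [this]
    apply mul_le_mul_of_nonneg_right _ (sq_nonneg _)
    nlinarith
  have h9 : 0 ≤ (1 - Real.cos (l * (y.1 : ℝ))) * (1 - rho l ^ n) :=
    mul_nonneg (by linarith) (by linarith)
  nlinarith [mul_nonneg hl.le (sq_nonneg (y.1:ℝ))]

lemma tm_summable {θ : ℝ} (hθ : 0 ≤ θ) (hθ2 : θ < 2) (y : ℤ × ℤ) :
    Summable (fun k => tm θ k y) := by
  apply Summable.of_nonneg_of_le (fun k => tm_nonneg hθ k y) (fun k => tm_le hθ k y)
  apply Summable.mul_right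
  exact summable_geometric_of_lt_one (by linarith) (by linarith)

lemma tm_harm (θ : ℝ) (k : ℕ) (x y : ℤ) (hy : 1 ≤ y) :
    tm θ k (x+1,y) + tm θ k (x-1,y) + tm θ k (x,y+1) + tm θ k (x,y-1) = 4 * tm θ k (x,y) := by
  obtain ⟨n, rfl⟩ : ∃ n : ℕ, y = n + 1 := ⟨(y-1).toNat, by omega⟩
  unfold tm
  simp only
  have e1 : ((n:ℤ)+1).toNat = n+1 := by omega
  have e2 : ((n:ℤ)+1+1).toNat = n+2 := by omega
  have e3 : ((n:ℤ)+1-1).toNat = n := by omega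
  rw [e1, e2, e3]
  set l : ℝ := (1/2)^k
  have h := rho_eq l
  push_cast
  have c1 : l * ((x:ℝ) + 1) = l * x + l := by ring
  have c2 : l * ((x:ℝ) - 1) = l * x - l := by ring
  rw [c1, c2, Real.cos_add, Real.cos_sub]
  linear_combination (-(θ^k) * Real.cos (l * x) * rho l ^ n) * h

lemma ff_harm {θ : ℝ} (hθ : 0 ≤ θ) (hθ2 : θ < 2) (x y : ℤ) (hy : 1 ≤ y) :
    ff θ (x+1,y) + ff θ (x-1,y) + ff θ (x,y+1) + ff θ (x,y-1) = 4 * ff θ (x,y) := by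
  unfold ff
  have s := tm_summable hθ hθ2
  rw [← tsum_mul_left, ← (s _).tsum_add (s _), ← ((s _).add (s _)).tsum_add (s _),
    ← (((s _).add (s _)).add (s _)).tsum_add (s _)]
  congr 1
  funext k
  exact tm_harm θ k x y hy

lemma ff_nonneg {θ : ℝ} (hθ : 0 ≤ θ) (y : ℤ × ℤ) : 0 ≤ ff θ y :=
  tsum_nonneg fun k => tm_nonneg hθ k y

lemma cos_one_lt : Real.cos 1 < 1 := by
  have := Real.cos_lt_cos_of_nonneg_of_le_pi_div_two (x := 0) (y := 1) le_rfl
    (by linarith [Real.pi_gt_three]) one_pos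
  simpa using this

lemma ff_ge {β : ℝ} (hβ : 0 < β) (hβ1 : β < 1) (y : ℤ × ℤ) :
    |(y.1 : ℝ)| ^ β ≤ (2 ^ β / (1 - Real.cos 1)) * ff (2 ^ β) y := by
  have hc := cos_one_lt
  have hθ : (0:ℝ) < 2 ^ β := by positivity
  have hθ2 : (2:ℝ)^β < 2 := by
    calc (2:ℝ)^β < 2 ^ (1:ℝ) := Real.rpow_lt_rpow_of_exponent_lt (by norm_num) hβ1
      _ = 2 := by simp
  by_cases h0 : y.1 = 0
  · rw [h0]
    simp only [Int.cast_zero, abs_zero]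
    rw [Real.zero_rpow hβ.ne']
    have := ff_nonneg hθ.le y
    have : 0 < 1 - Real.cos 1 := by linarith
    positivity
  · set m := y.1.natAbs with hm
    have hm0 : m ≠ 0 := by omega
    have habs : |(y.1:ℝ)| = m := by
      rw [hm, Nat.cast_natAbs, Int.cast_abs]
    set k := Nat.log 2 m with hk
    have hk1 : (2:ℝ)^k ≤ m := by exact_mod_cast Nat.pow_log_le_self 2 hm0
    have hk2 : (m:ℝ) < 2^(k+1) := by exact_mod_cast Nat.lt_pow_succ_log_self (by norm_num) m
    have hl : (0:ℝ) < (1/2)^k := by positivity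
    have hl2 : ((1:ℝ)/2)^k * 2^k = 1 := by rw [← mul_pow]; norm_num
    have hcos : Real.cos ((1/2)^k * (y.1 : ℝ)) ≤ Real.cos 1 := by
      rw [← Real.cos_abs, abs_mul, habs, abs_of_pos hl]
      apply Real.cos_le_cos_of_nonneg_of_le_pi (by norm_num)
      · have : ((1:ℝ)/2)^k * m ≤ (1/2)^k * 2^(k+1) := by gcongr
        rw [pow_succ, ← mul_assoc, hl2] at this
        linarith [Real.pi_gt_three]
      · calc (1:ℝ) = (1/2)^k * 2^k := hl2.symm
          _ ≤ _ := by gcongr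
    have h1 := tm_ge hθ.le k y Real.cos_one_pos.le hcos
    have h2 : tm (2^β) k y ≤ ff (2^β) y :=
      (tm_summable hθ.le hθ2 y).le_tsum k (fun j _ => tm_nonneg hθ.le j y)
    have h3 : |(y.1 : ℝ)| ^ β ≤ (2^β)^(k+1) := by
      rw [habs]
      calc (m:ℝ)^β ≤ ((2:ℝ)^(k+1))^β := Real.rpow_le_rpow (by positivity) hk2.le hβ.le
        _ = (2^β)^(k+1) := by
          rw [← Real.rpow_natCast, ← Real.rpow_natCast, ← Real.rpow_mul (by norm_num),
            ← Real.rpow_mul (by norm_num), mul_comm]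
    have hpos : 0 < 1 - Real.cos 1 := by linarith
    calc |(y.1 : ℝ)| ^ β ≤ (2^β)^(k+1) := h3
      _ = (2 ^ β / (1 - Real.cos 1)) * ((2^β)^k * (1 - Real.cos 1)) := by
        rw [pow_succ]; field_simp
      _ ≤ _ := by
        apply mul_le_mul_of_nonneg_left (h1.trans h2)
        positivity

lemma ff_small {θ : ℝ} (hθ : 0 ≤ θ) (hθ2 : θ < 2) (a : ℤ) :
    Tendsto (fun R : ℕ => ff θ (a, (R:ℤ)) / R) atTop (nhds 0) := by
  have := tendsto_tsum_of_dominated_convergence (𝓕 := atTop)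
    (f := fun (R : ℕ) (k : ℕ) => tm θ k (a, (R:ℤ)) / R) (g := fun _ => (0:ℝ))
    (bound := fun k => (θ/2)^k * ((a:ℝ)^2 + 1))
    ((summable_geometric_of_lt_one (by linarith) (by linarith)).mul_right _)
    (by
      intro k
      apply squeeze_zero (g := fun R : ℕ => θ^k * 2 / (R:ℝ))
      · intro R
        exact div_nonneg (tm_nonneg hθ _ _) (Nat.cast_nonneg _)
      · intro R
        exact div_le_div_of_nonneg_right (tm_le_two hθ _ _) (Nat.cast_nonneg _)
      · exact tendsto_const_div_atTop_nhds_zero_nat _)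
    (by
      filter_upwards [eventually_ge_atTop 1] with R hR k
      have hR' : (1:ℝ) ≤ R := by exact_mod_cast hR
      rw [Real.norm_eq_abs, abs_of_nonneg (div_nonneg (tm_nonneg hθ _ _) (Nat.cast_nonneg _)),
        div_le_iff₀ (by linarith)]
      refine (tm_le hθ k _).trans ?_
      simp only [Int.toNat_natCast]
      rw [mul_assoc]
      apply mul_le_mul_of_nonneg_left
      · nlinarith [sq_nonneg (a:ℝ)]
      · exact pow_nonneg (by linarith) _)
  simp only [tsum_zero, tsum_div_const] at this
  exact this

/-! ### Potential theory -/

/-- Indicator of the line of height `j` off `B`. -/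
noncomputable def sl (B : Set (ℤ × ℤ)) (j : ℤ) : ℤ × ℤ → ℝ := (lineH j \ B).indicator 1

lemma sl_nonneg (B : Set (ℤ × ℤ)) (j : ℤ) (y : ℤ × ℤ) : 0 ≤ sl B j y :=
  Set.indicator_nonneg (fun _ _ => zero_le_one) _

lemma sl_eq (B : Set (ℤ × ℤ)) (j : ℤ) {y : ℤ × ℤ} (hy : y ∈ UU B) :
    sl B j y = if y.2 = j then 1 else 0 := by
  classical
  unfold sl
  rw [Set.indicator_apply]
  have : y ∈ lineH j \ B ↔ y.2 = j := ⟨fun h => h.1, fun h => ⟨h, hy.2⟩⟩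
  simp [this]

lemma line_bound (B : Set (ℤ × ℤ)) (N : ℤ) (hN : 0 < N) (n : ℕ) (y : ℤ × ℤ) (hy : y ∈ UU B) :
    ∑ m ∈ Finset.range n, (T (UU B) ^ m) (sl B N) y ≤ 4 * N := by
  have hw0 : ∀ z : ℤ × ℤ, (0:ℝ) ≤ ((4 * min (max z.2 0) N : ℤ) : ℝ) := by
    intro z
    exact_mod_cast (by omega : (0:ℤ) ≤ 4 * min (max z.2 0) N)
  have h := upper_sum (UU B) (w := fun z => ((4 * min (max z.2 0) N : ℤ) : ℝ)) (s := sl B N) (by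
    intro z hz
    rw [sl_eq B N hz, T_apply]
    have h1 : ∑ e ∈ dirs, (UU B).indicator (fun z => ((4 * min (max z.2 0) N : ℤ) : ℝ)) (z + e)
        ≤ ∑ e ∈ dirs, ((4 * min (max (z + e).2 0) N : ℤ) : ℝ) := by
      apply Finset.sum_le_sum
      intro e _
      exact Set.indicator_le_self' (fun y _ => hw0 y) _
    have h2 : ∑ e ∈ dirs, ((4 * min (max (z + e).2 0) N : ℤ) : ℝ)
        = 4 * (((4 * min (max z.2 0) N : ℤ) : ℝ) - if z.2 = N then 1 else 0) := by
      rw [sum_dirs]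
      have hz0 : 0 < z.2 := hz.1
      split_ifs with h
      · norm_cast
        simp only [Prod.snd_add]
        push_cast
        omega
      · norm_cast
        simp only [Prod.snd_add]
        push_cast
        omega
    linarith) n y hy
  have h3 := Tn_nonneg (UU B) hw0 n y
  have h4 : ((4 * min (max y.2 0) N : ℤ) : ℝ) ≤ 4 * N := by
    exact_mod_cast (by omega : 4 * min (max y.2 0) N ≤ 4 * N)
  linarith

lemma line_summable_U (B : Set (ℤ × ℤ)) (N : ℤ) (hN : 0 < N) (y : ℤ × ℤ) (hy : y ∈ UU B) :
    Summable (fun n => (T (UU B) ^ n) (sl B N) y) :=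
  summable_of_sum_range_le (fun n => Tn_nonneg _ (sl_nonneg B N) n y)
    (fun n => line_bound B N hN n y hy)

lemma line_summable (B : Set (ℤ × ℤ)) (N : ℤ) (hN : 0 < N) (y : ℤ × ℤ) :
    Summable (fun n => (T (UU B) ^ n) (sl B N) y) := by
  rw [← summable_nat_add_iff 1]
  simp only [T_succ, T_apply]
  apply Summable.mul_left
  apply summable_sum
  intro e _
  by_cases h : y + e ∈ UU B
  · simp only [Set.indicator_of_mem h]
    exact line_summable_U B N hN _ h
  · simp only [Set.indicator_of_notMem h]
    exact summable_zero

lemma height_le (B : Set (ℤ × ℤ)) (n : ℕ) (y : ℤ × ℤ) (hy : y ∈ UU B) :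
    (T (UU B) ^ n) (fun z => (z.2 : ℝ)) y ≤ y.2 := by
  have h := upper_sum (UU B) (w := fun z => (z.2 : ℝ)) (s := 0) (by
    intro z hz
    rw [T_apply]
    have hz0 : 0 < z.2 := hz.1
    have h1 : ∑ e ∈ dirs, (UU B).indicator (fun z => (z.2 : ℝ)) (z + e)
        ≤ ∑ e ∈ dirs, ((z + e).2 : ℝ) := by
      apply Finset.sum_le_sum
      intro e he
      have := dirs_snd he
      apply Set.indicator_apply_le' (fun _ => le_rfl)
      intro _
      have : 0 ≤ (z + e).2 := by simp only [Prod.snd_add]; omega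
      exact_mod_cast this
    rw [sum_dirs (fun e => ((z + e).2 : ℝ))] at h1
    simp only [Prod.snd_add] at h1
    push_cast at h1
    simp only [Pi.zero_apply]
    linarith) n y hy
  simpa using h

lemma green_ge (B : Set (ℤ × ℤ)) (N : ℤ) (hN : 0 < N) (v : ℤ × ℤ → ℝ)
    (hv : ∀ y ∈ UU B, v y - sl B N y ≤ T (UU B) v y)
    (hvN : ∀ y ∈ UU B, v y ≤ 4 * N) (p : ℤ × ℤ) (hp : p ∈ UU B) :
    v p ≤ ∑' n, (T (UU B) ^ n) (sl B N) p := by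
  set S := ∑' n, (T (UU B) ^ n) (sl B N) p with hS
  have hN' : (0:ℝ) < N := by exact_mod_cast hN
  have step1 : ∀ M n : ℕ, 0 < M → v p ≤ S + (4 * N) * ∑ j ∈ Finset.range M,
      (T (UU B) ^ n) (sl B ((j:ℤ)+1)) p + (4 * N / M) * p.2 := by
    intro M n hM
    have hM' : (0:ℝ) < M := by exact_mod_cast hM
    have h1 := lower_sum (UU B) hv n p hp
    have h2 : ∑ m ∈ Finset.range n, (T (UU B) ^ m) (sl B N) p ≤ S :=
      (line_summable B N hN p).sum_le_tsum _ (fun m _ => Tn_nonneg _ (sl_nonneg B N) m p)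
    have h3 := Tn_mono (UU B) (φ := v) (ψ := (4 * (N:ℝ)) • (∑ j ∈ Finset.range M, sl B ((j:ℤ)+1))
      + (4 * (N:ℝ) / M) • (fun z : ℤ × ℤ => (z.2 : ℝ))) (by
        intro y hy
        have hy0 : 0 < y.2 := hy.1
        have hy0' : (0:ℝ) < y.2 := by exact_mod_cast hy0
        refine (hvN y hy).trans ?_
        simp only [Pi.add_apply, Pi.smul_apply, Finset.sum_apply, smul_eq_mul]
        by_cases hyM : y.2 ≤ M
        · have : (1:ℝ) ≤ ∑ j ∈ Finset.range M, sl B ((j:ℤ)+1) y := by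
            have hj : (y.2 - 1).toNat ∈ Finset.range M := by
              rw [Finset.mem_range]; omega
            refine le_trans ?_ (Finset.single_le_sum (f := fun j : ℕ => sl B ((j:ℤ)+1) y)
              (fun j _ => sl_nonneg B _ y) hj)
            simp only [sl_eq B _ hy]
            rw [if_pos (by omega)]
          have h5 : 0 ≤ (4 * (N:ℝ) / M) * y.2 := by positivity
          nlinarith
        · have h5 : 0 ≤ ∑ j ∈ Finset.range M, sl B ((j:ℤ)+1) y :=
            Finset.sum_nonneg fun j _ => sl_nonneg B _ y
          have h6 : (M:ℝ) ≤ y.2 := by exact_mod_cast (by omega : (M:ℤ) ≤ y.2)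
          have h7 : 4 * (N:ℝ) ≤ (4 * (N:ℝ) / M) * y.2 := by
            rw [div_mul_eq_mul_div, le_div_iff₀ hM']
            nlinarith
          have : 0 ≤ (4 * (N:ℝ)) * ∑ j ∈ Finset.range M, sl B ((j:ℤ)+1) y := by positivity
          linarith) n p hp
    simp only [map_add, map_smul, map_sum, Pi.add_apply, Pi.smul_apply, Finset.sum_apply,
      smul_eq_mul] at h3
    have h4 := height_le B n p hp
    have h5 : (4 * (N:ℝ) / M) * (T (UU B) ^ n) (fun z => (z.2 : ℝ)) p ≤ (4 * (N:ℝ) / M) * p.2 :=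
      mul_le_mul_of_nonneg_left h4 (by positivity)
    linarith
  have step2 : ∀ M : ℕ, 0 < M → v p ≤ S + (4 * N / M) * p.2 := by
    intro M hM
    have ht : Tendsto (fun n : ℕ => S + (4 * N) * ∑ j ∈ Finset.range M,
      (T (UU B) ^ n) (sl B ((j:ℤ)+1)) p + (4 * N / M) * p.2) atTop
      (nhds (S + (4 * N) * ∑ j ∈ Finset.range M, (0:ℝ) + (4 * N / M) * p.2)) := by
      apply Tendsto.add_const
      apply Tendsto.const_add
      apply Tendsto.const_mul
      apply tendsto_finsetSum
      intro j _
      exact (line_summable B _ (by omega) p).tendsto_atTop_zero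
    have := ge_of_tendsto' ht (fun n => step1 M n hM)
    simpa using this
  have ht : Tendsto (fun M : ℕ => S + (4 * N / (M:ℝ)) * p.2) atTop (nhds (S + 0 * p.2)) := by
    apply Tendsto.const_add
    apply Tendsto.mul_const
    exact tendsto_const_div_atTop_nhds_zero_nat _
  have := ge_of_tendsto ht ((eventually_gt_atTop 0).mono step2)
  simpa using this

lemma harm_eq (B : Set (ℤ × ℤ)) (N : ℕ) (hN : 0 < N) (x : ℤ × ℤ) (hx : x ∈ B) :
    harm B N x = ∑' n, (T (UU B) ^ n) (sl B N) x := by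
  unfold harm hitProb
  have h1 : ∀ (z : ↥(lineH (N:ℤ) \ B)) (n : ℕ),
      stepProb n (fun σ => pos (z : ℤ × ℤ) σ n = x ∧ x ∈ B ∪ lineH 0 ∧
        ∀ m < n, pos (z : ℤ × ℤ) σ m ∉ B ∪ lineH 0)
        = (T (UU B) ^ n) (Pi.single (z : ℤ × ℤ) 1) x := by
    intro z n
    apply reversal B x hx n
    have : (z : ℤ × ℤ).2 = N := z.2.1
    omega
  simp only [h1]
  have hs : ∀ n, HasSum (fun z : ↥(lineH (N:ℤ) \ B) => (T (UU B) ^ n) (Pi.single (z : ℤ × ℤ) 1) x)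
      ((T (UU B) ^ n) (sl B N) x) := fun n => hasSum_Tn _ _ n x
  have hsum : Summable (Function.uncurry fun (n : ℕ) (z : ↥(lineH (N:ℤ) \ B)) =>
      (T (UU B) ^ n) (Pi.single (z : ℤ × ℤ) 1) x) := by
    rw [summable_prod_of_nonneg]
    · refine ⟨fun n => (hs n).summable, ?_⟩
      simp only [Function.uncurry_apply_pair, (hs _).tsum_eq]
      exact line_summable B N (by omega) x
    · rintro ⟨n, z⟩
      apply Tn_nonneg
      intro y
      by_cases h : y = (z : ℤ × ℤ)
      · rw [h]; simp
      · simp [h]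
  rw [hsum.tsum_comm]
  simp only [(hs _).tsum_eq]

lemma main_lower (B : Set (ℤ × ℤ)) (β : ℝ) (hβ : 0 < β) (hβ1 : β < 1) (H : ℝ) (hH : 0 ≤ H)
    (hBH : ∀ y ∈ B, (y.2 : ℝ) ≤ H ∨ (y.2 : ℝ) ≤ |(y.1 : ℝ)| ^ β)
    (a b : ℤ) (hb : 0 ≤ b) (hab : (a, b) ∈ B) (hcol : ∀ j, b < j → (a, j) ∉ B) :
    ∃ c : ℝ, 0 < c ∧ ∀ᶠ N : ℕ in atTop, c ≤ harm B N (a, b) := by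
  have hθ : (0:ℝ) < 2 ^ β := by positivity
  have hθ2 : (2:ℝ)^β < 2 := by
    calc (2:ℝ)^β < 2 ^ (1:ℝ) := Real.rpow_lt_rpow_of_exponent_lt (by norm_num) hβ1
      _ = 2 := by simp
  set C := (2:ℝ) ^ β / (1 - Real.cos 1) with hC
  have hC0 : 0 < C := div_pos hθ (by linarith [cos_one_lt])
  have hf0 := ff_nonneg hθ.le
  have hfge := ff_ge hβ hβ1
  have hsm := ff_small hθ.le hθ2 a
  set f := ff ((2:ℝ)^β) with hf
  have hcolU : ∀ j : ℤ, b < j → (a, j) ∈ UU B := fun j hj => ⟨by simp only; omega, hcol j hj⟩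
  have hBle : ∀ y ∈ B, (y.2 : ℝ) ≤ C * f y + H := by
    intro y hy
    have := hfge y
    have := mul_nonneg hC0.le (hf0 y)
    rcases hBH y hy with h | h <;> linarith
  -- choose the height
  have hev : ∀ᶠ R : ℕ in atTop, f (a, (R:ℤ)) / R < 1 / (2 * C) :=
    hsm.eventually_lt_const (by positivity)
  obtain ⟨R, hR1, hR2, hR3⟩ := (hev.and ((eventually_ge_atTop (b.toNat + 1)).and
    (eventually_ge_atTop (⌈2 * (H + 1)⌉₊)))).exists
  have hR3' : 2 * (H + 1) ≤ R := Nat.ceil_le.1 hR3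
  have hR0 : (0:ℝ) < R := by linarith
  have hbR : b < R := by omega
  have hval : 1 ≤ (R:ℝ) - C * f (a, (R:ℤ)) - H := by
    rw [div_lt_div_iff₀ hR0 (by positivity)] at hR1
    nlinarith
  refine ⟨(1/4)^(R - b.toNat) * 4, by positivity, ?_⟩
  filter_upwards [eventually_ge_atTop R] with N hN
  have hN0 : 0 < N := by omega
  rw [harm_eq B N hN0 _ hab]
  have hg := green_ge B N (by omega)
    (fun y => ((4 * min y.2 N : ℤ) : ℝ) - 4 * (C * f y + H)) (by
    intro z hz
    have hz0 : 0 < z.2 := hz.1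
    rw [sl_eq B N hz, T_apply]
    have h1 : ∑ e ∈ dirs, (((4 * min (z + e).2 N : ℤ) : ℝ) - 4 * (C * f (z + e) + H)) ≤
        ∑ e ∈ dirs, (UU B).indicator
          (fun y => ((4 * min y.2 N : ℤ) : ℝ) - 4 * (C * f y + H)) (z + e) := by
      apply Finset.sum_le_sum
      intro e he
      have he' := dirs_snd he
      by_cases hu : z + e ∈ UU B
      · rw [Set.indicator_of_mem hu]
      · rw [Set.indicator_of_notMem hu]
        have h0 : 0 ≤ (z + e).2 := by simp only [Prod.snd_add]; omega
        have hle : ((z + e).2 : ℝ) ≤ C * f (z + e) + H := by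
          by_cases hB' : z + e ∈ B
          · exact hBle _ hB'
          · have : (z + e).2 = 0 := by
              by_contra hne
              exact hu ⟨by omega, hB'⟩
            rw [this]
            have := mul_nonneg hC0.le (hf0 (z + e))
            push_cast
            linarith
        have : ((4 * min (z + e).2 N : ℤ) : ℝ) ≤ 4 * ((z + e).2 : ℝ) := by
          exact_mod_cast (by omega : 4 * min (z + e).2 (N:ℤ) ≤ 4 * (z + e).2)
        linarith
    have h2 : ∑ e ∈ dirs, ((4 * min (z + e).2 N : ℤ) : ℝ)
        = 4 * (((4 * min z.2 N : ℤ) : ℝ) - if z.2 = (N:ℤ) then 1 else 0) := by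
      rw [sum_dirs]
      split_ifs with h
      · norm_cast
        simp only [Prod.snd_add]
        push_cast
        omega
      · norm_cast
        simp only [Prod.snd_add]
        push_cast
        omega
    have h3 : ∑ e ∈ dirs, f (z + e) = 4 * f z := by
      rw [sum_dirs]
      obtain ⟨x, y⟩ := z
      have := ff_harm hθ.le hθ2 x y (by simp only at hz0; omega)
      simp only [Prod.mk_add_mk, add_zero, ← sub_eq_add_neg]
      rw [← hf] at this
      linarith
    have h4 : ∑ e ∈ dirs, (((4 * min (z + e).2 N : ℤ) : ℝ) - 4 * (C * f (z + e) + H))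
        = ∑ e ∈ dirs, ((4 * min (z + e).2 N : ℤ) : ℝ) - 4 * C * ∑ e ∈ dirs, f (z + e)
          - 16 * H := by
      simp only [sum_dirs]
      ring
    rw [h2, h3] at h4
    rw [h4] at h1
    linarith)
    (by
      intro y _
      have : ((4 * min y.2 N : ℤ) : ℝ) ≤ 4 * (N:ℝ) := by
        exact_mod_cast (by omega : 4 * min y.2 (N:ℤ) ≤ 4 * N)
      have h5 := mul_nonneg hC0.le (hf0 y)
      push_cast at this ⊢
      linarith)
    (a, (R:ℤ)) (hcolU _ hbR)
  have hmin : min ((R:ℤ)) (N:ℤ) = R := min_eq_left (by exact_mod_cast hN)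
  simp only [hmin] at hg
  push_cast at hg
  set k := R - b.toNat with hk
  have hk' : b + (k:ℤ) = R := by omega
  have hs := line_summable B N (by omega) (a, b)
  have hcol' : ∀ n, (1/4)^k * (T (UU B) ^ n) (sl B N) (a, (R:ℤ)) ≤
      (T (UU B) ^ (n + k)) (sl B N) (a, b) := by
    intro n
    have := column_ge (UU B) (Tn_nonneg (UU B) (sl_nonneg B N) n) k a b hcolU
    rw [hk'] at this
    rw [add_comm n k, pow_add, Module.End.mul_apply]
    exact this
  calc (1/4:ℝ)^k * 4 ≤ (1/4)^k * ∑' n, (T (UU B) ^ n) (sl B N) (a, (R:ℤ)) := by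
        apply mul_le_mul_of_nonneg_left _ (by positivity)
        linarith
    _ = ∑' n, (1/4)^k * (T (UU B) ^ n) (sl B N) (a, (R:ℤ)) := tsum_mul_left.symm
    _ ≤ ∑' n, (T (UU B) ^ (n + k)) (sl B N) (a, b) := by
        apply Summable.tsum_le_tsum hcol'
        · exact (line_summable B N (by omega) _).mul_left _
        · exact (summable_nat_add_iff k).2 hs
    _ ≤ ∑' n, (T (UU B) ^ n) (sl B N) (a, b) := by
        rw [← hs.sum_add_tsum_nat_add k]
        have := Finset.sum_nonneg (s := Finset.range k)
          (fun i _ => Tn_nonneg (UU B) (sl_nonneg B N) i (a, b))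
        linarith

lemma harm_nonneg (B : Set (ℤ × ℤ)) (N : ℕ) (x : ℤ × ℤ) : 0 ≤ harm B N x := by
  unfold harm hitProb stepProb
  refine tsum_nonneg fun z => tsum_nonneg fun n => ?_
  positivity

lemma box_finite (α : ℝ) (h₀ : ℤ) : (boxD₀ α h₀).Finite := by
  apply ((Set.finite_Icc (-⌈(h₀ : ℝ) ^ α⌉) ⌈(h₀ : ℝ) ^ α⌉).prod (Set.finite_Icc 0 h₀)).subset
  rintro ⟨x, y⟩ ⟨h1, h2, h3⟩
  exact ⟨abs_le.1 h1, h2, h3⟩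

/-- A point of the core with a free column above it. -/
lemma exists_free (α : ℝ) (hα : 1 < α) (B : Set (ℤ × ℤ)) (hB : B ⊆ upperH) (h₀ : ℤ)
    (hmax : (Bhat α B).Nonempty → IsGreatest (Prod.snd '' Bhat α B) h₀)
    (hmin : Bhat α B = ∅ →
      IsLeast {h : ℤ | 0 ≤ h ∧
        (B ∩ {x | |x.1| ≤ ⌈(h : ℝ) ^ α⌉ ∧ 0 ≤ x.2 ∧ x.2 ≤ h}).Nonempty} h₀) :
    ∃ a b : ℤ, 0 ≤ b ∧ (a, b) ∈ B ∩ boxD₀ α h₀ ∧ ∀ j, b < j → (a, j) ∉ B := by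
  have hα0 : 0 < α := by linarith
  have hinv : ∀ x y : ℝ, 0 ≤ x → 0 ≤ y → (y ≤ x ^ (1/α) ↔ y ^ α ≤ x) := by
    intro x y hx hy
    rw [one_div]
    exact Real.le_rpow_inv_iff_of_pos hy hx hα0
  -- it suffices to find a point of the core
  have key : 0 ≤ h₀ ∧ (B ∩ boxD₀ α h₀).Nonempty := by
    rcases Set.eq_empty_or_nonempty (Bhat α B) with he | hn
    · obtain ⟨⟨h1, h2⟩, -⟩ := hmin he
      exact ⟨h1, h2⟩
    · obtain ⟨⟨⟨a, b⟩, hx, rfl⟩, -⟩ := hmax hn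
      have hb : 0 ≤ b := hB hx.1
      have hb' : (0:ℝ) ≤ b := by exact_mod_cast hb
      refine ⟨hb, (a, b), hx.1, ?_, hb, le_rfl⟩
      have h3 : ¬ ((b:ℝ) ≤ |(a:ℝ)| ^ (1/α)) := fun h => hx.2 ⟨hb, h⟩
      rw [hinv _ _ (abs_nonneg _) hb', not_le] at h3
      have h4 : ((|a| : ℤ) : ℝ) ≤ (⌈(b:ℝ)^α⌉ : ℝ) := by
        rw [Int.cast_abs]
        exact h3.le.trans (Int.le_ceil _)
      exact_mod_cast h4
  obtain ⟨hh0, ⟨a, b₁⟩, hxB, hx1, hx2, hx3⟩ := key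
  simp only at hx1 hx2 hx3
  have hh0' : (0:ℝ) ≤ h₀ := by exact_mod_cast hh0
  -- nothing of `B` above the box in this column
  have hfree : ∀ j, h₀ < j → (a, j) ∉ B := by
    intro j hj hjB
    have hnot : (a, j) ∉ Bhat α B := by
      intro hjh
      have := (hmax ⟨_, hjh⟩).2 ⟨_, hjh, rfl⟩
      simp only at this
      omega
    have hj1 : (j:ℝ) ≤ |(a:ℝ)| ^ (1/α) := by
      by_contra hcon
      exact hnot ⟨hjB, fun h => hcon h.2⟩
    have hj0 : (0:ℝ) ≤ j := by exact_mod_cast (by omega : (0:ℤ) ≤ j)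
    rw [hinv _ _ (abs_nonneg _) hj0] at hj1
    have hj2 : (h₀:ℝ) + 1 ≤ j := by exact_mod_cast hj
    have h5 : ((h₀:ℝ) + 1) ^ α ≤ (j:ℝ) ^ α := Real.rpow_le_rpow (by linarith) hj2 hα0.le
    have h6 : (h₀:ℝ) ^ α + 1 ≤ ((h₀:ℝ) + 1) ^ α := by
      have := Real.add_rpow_le_rpow_add hh0' zero_le_one hα.le
      simpa using this
    have h7 : |(a:ℝ)| ≤ (⌈(h₀:ℝ)^α⌉ : ℝ) := by
      rw [← Int.cast_abs]
      exact_mod_cast hx1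
    have h8 := Int.ceil_lt_add_one ((h₀:ℝ)^α)
    linarith
  -- take the top point of the column
  obtain ⟨b, hbP, hbmax⟩ := Int.exists_greatest_of_bdd (P := fun j => (a, j) ∈ B)
    ⟨h₀, fun j hj => by
      by_contra hcon
      exact hfree j (by omega) hj⟩ ⟨b₁, hxB⟩
  have hb0 : 0 ≤ b := hB hbP
  refine ⟨a, b, hb0, ⟨hbP, hx1, hb0, ?_⟩, ?_⟩
  · by_contra hcon
    exact hfree b (by simpa using hcon) hbP
  · intro j hj hjB
    have := hbmax j hjB
    omega

/-- **Theorem 2, quantitative form.** Let `α > 1` with `α ∉ ℚ ∪ ℚ₂`, let `B ⊂ ℍ` be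
nonempty with `B̂ = B \ {x ∈ ℍ : x₂ ≤ |x₁|^{1/α}}` finite, let `h₀ = max_{x ∈ B̂} x₂`
if `B̂ ≠ ∅` and `h₀ = min {h ≥ 0 : B ∩ ([−⌈h^α⌉,⌈h^α⌉] × [0,h]) ≠ ∅}` if `B̂ = ∅`,
and put `B₀ = B ∩ D₀` where `D₀ = [−⌈h₀^α⌉, ⌈h₀^α⌉] × [0, h₀]`.  Then there exists
`c > 0` such that `H_{B,N}(B₀) = Σ_{x ∈ B₀} H_{B,N}(x) ≥ c` for all sufficiently
large `N`; in particular any limit of `Σ_{x ∈ B₀} H_{B,N}(x)` as `N → ∞` is `≥ c > 0`. -/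
theorem harm_core_ge (α : ℝ) (hα : 1 < α) (hirr : Irrational α) (hQ2 : α ∉ Q2)
    (B : Set (ℤ × ℤ)) (hB : B ⊆ upperH) (hne : B.Nonempty)
    (hfin : (Bhat α B).Finite)
    (h₀ : ℤ)
    (hmax : (Bhat α B).Nonempty → IsGreatest (Prod.snd '' Bhat α B) h₀)
    (hmin : Bhat α B = ∅ →
      IsLeast {h : ℤ | 0 ≤ h ∧
        (B ∩ {x | |x.1| ≤ ⌈(h : ℝ) ^ α⌉ ∧ 0 ≤ x.2 ∧ x.2 ≤ h}).Nonempty} h₀) :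
    ∃ c : ℝ, 0 < c ∧
      (∀ᶠ N : ℕ in atTop, c ≤ ∑' x : ↥(B ∩ boxD₀ α h₀), harm B N (x : ℤ × ℤ)) ∧
      ∀ l : ℝ, Tendsto (fun N : ℕ => ∑' x : ↥(B ∩ boxD₀ α h₀), harm B N (x : ℤ × ℤ))
        atTop (nhds l) → c ≤ l := by
  obtain ⟨a, b, hb, hab, hcol⟩ := exists_free α hα B hB h₀ hmax hmin
  obtain ⟨c, hc, hev⟩ := main_lower B (1/α) (by positivity) (by
      rw [div_lt_one (by linarith)]; exact hα) (max (h₀:ℝ) 0) (le_max_right _ _) (by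
      intro y hy
      by_cases hyh : y ∈ Bhat α B
      · left
        have h1 : y.2 ≤ h₀ := (hmax ⟨y, hyh⟩).2 ⟨y, hyh, rfl⟩
        have h2 : (y.2 : ℝ) ≤ h₀ := by exact_mod_cast h1
        exact h2.trans (le_max_left _ _)
      · right
        by_contra hcon
        exact hyh ⟨hy, fun h => hcon h.2⟩) a b hb hab.1 hcol
  have hfinite : Finite ↥(B ∩ boxD₀ α h₀) :=
    ((box_finite α h₀).subset Set.inter_subset_right).to_subtype
  have hev' : ∀ᶠ N : ℕ in atTop, c ≤ ∑' x : ↥(B ∩ boxD₀ α h₀), harm B N (x : ℤ × ℤ) := by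
    filter_upwards [hev] with N hN
    refine hN.trans ?_
    exact (Summable.of_finite (f := fun x : ↥(B ∩ boxD₀ α h₀) => harm B N (x : ℤ × ℤ))).le_tsum
      (⟨(a, b), hab⟩ : ↥(B ∩ boxD₀ α h₀)) (fun x _ => harm_nonneg B N x)
  exact ⟨c, hc, hev', fun l hl => ge_of_tendsto hl hev'⟩

end SHM
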